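/- Let Φ = ∀X ∃Y ψ be a quantified Boolean formula, where ψ is a propositional formula over the disjoint atom sets X and Y, let u be a fresh atom, and let φ = ψ ∨ u. Then Φ is true if and only if CIRC(φ; u; Y) ⊨ ¬u, i.e., every model of φ that is minimal in u while Y varies and X stays fixed satisfies ¬u. -/

import Mathlib

/-!
STATEMENT 5: ordinary circumscription expresses the QBF `Φ = ∀X ∃Y ψ`:
`Φ` is true iff `CIRC(ψ ∨ u; u; Y) ⊨ ¬u`.
-/

namespace NestedCirc

universe u
variable {α : Type u}

/-- Propositional formulas over atoms `α`. -/
inductive PForm (α : Type u) : Type u where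
  | tru : PForm α
  | fls : PForm α
  | atom : α → PForm α
  | neg : PForm α → PForm α
  | conj : PForm α → PForm α → PForm α
  | disj : PForm α → PForm α → PForm α

namespace PForm

/-- Satisfaction of a propositional formula in an interpretation (set of true atoms). -/
def sat : PForm α → Set α → Prop
  | tru, _ => True
  | fls, _ => False
  | atom a, M => a ∈ M
  | neg φ, M => ¬ φ.sat M
  | conj φ ψ, M => φ.sat M ∧ ψ.sat M
  | disj φ ψ, M => φ.sat M ∨ ψ.sat M

/-- Implication `φ → ψ`. -/
def imp (φ ψ : PForm α) : PForm α := disj (neg φ) ψ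

/-- Equivalence `φ ↔ ψ`. -/
def iffF (φ ψ : PForm α) : PForm α := conj (imp φ ψ) (imp ψ φ)

/-- The atoms occurring in a formula. -/
def atoms : PForm α → Set α
  | tru => ∅
  | fls => ∅
  | atom a => {a}
  | neg φ => φ.atoms
  | conj φ ψ => φ.atoms ∪ ψ.atoms
  | disj φ ψ => φ.atoms ∪ ψ.atoms

/-- Conjunction of a list of formulas. -/
def conjList (l : List (PForm α)) : PForm α := l.foldr conj tru

end PForm

/-- `M ≤_{P;Z} M'` : `M` agrees with `M'` on the fixed atoms `(P ∪ Z)ᶜ`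
and is smaller or equal on the minimized atoms `P`. -/
def lePZ (P Z M M' : Set α) : Prop :=
  M ∩ P ⊆ M' ∩ P ∧ M ∩ (P ∪ Z)ᶜ = M' ∩ (P ∪ Z)ᶜ

/-- `M <_{P;Z} M'` (strict preference). -/
def ltPZ (P Z M M' : Set α) : Prop := lePZ P Z M M' ∧ ¬ lePZ P Z M' M

/-- Let `Φ = ∀X ∃Y ψ` be a QBF, where `ψ` is propositional over the
disjoint atom sets `X` and `Y`, let `u` be a fresh atom, and let `φ = ψ ∨ u`.  Then `Φ`
is true if and only if `CIRC(φ; u; Y) ⊨ ¬u`, i.e., every model of `φ` that is minimal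
in `u` while `Y` varies and `X` stays fixed satisfies `¬u`. -/
theorem qbf_iff_circ_entails_not_u (X Y : Set α) (u : α) (ψ : PForm α)
    (hXY : Disjoint X Y) (hu : u ∉ X ∪ Y) (hAt : X ∪ Y ∪ {u} = Set.univ)
    (hatoms : ψ.atoms ⊆ X ∪ Y) :
    (∀ IX : Set α, ∃ IY : Set α, ψ.sat ((IX ∩ X) ∪ (IY ∩ Y))) ↔
      (∀ M : Set α,
        ((ψ.disj (.atom u)).sat M ∧
          ∀ N : Set α, (ψ.disj (.atom u)).sat N → ¬ ltPZ {u} Y N M) →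
        u ∉ M) := by
  have hall : ∀ x, x ∈ X ∨ x ∈ Y ∨ x = u := by
    intro x
    have hx : x ∈ X ∪ Y ∪ {u} := hAt ▸ Set.mem_univ x
    rcases hx with (h | h) | h
    · exact Or.inl h
    · exact Or.inr (Or.inl h)
    · exact Or.inr (Or.inr h)
  have hd : ∀ x, x ∈ X → x ∉ Y := fun x h1 h2 => Set.disjoint_left.mp hXY h1 h2
  have huX : u ∉ X := fun h => hu (Or.inl h)
  have huY : u ∉ Y := fun h => hu (Or.inr h)
  constructor
  · rintro h M ⟨-, hmin⟩ huM
    obtain ⟨IY, hIY⟩ := h M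
    refine hmin _ (Or.inl hIY) ⟨⟨?_, ?_⟩, ?_⟩
    · rintro x ⟨-, hx⟩
      rw [Set.mem_singleton_iff] at hx
      subst hx
      exact ⟨huM, rfl⟩
    · ext x
      have := hall x
      simp only [Set.mem_inter_iff, Set.mem_union, Set.mem_compl_iff, Set.mem_singleton_iff]
      tauto
    · rintro ⟨h1, -⟩
      rcases (h1 ⟨huM, rfl⟩).1 with h2 | h2
      · exact huX h2.2
      · exact huY h2.2
  · intro h IX
    by_contra hno
    refine h ((IX ∩ X) ∪ {u}) ⟨Or.inr (Or.inr rfl), ?_⟩ (Or.inr rfl)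
    rintro N hN ⟨⟨-, heq⟩, hnle⟩
    by_cases huN : u ∈ N
    · refine hnle ⟨?_, heq.symm⟩
      rintro x ⟨-, hx⟩
      rw [Set.mem_singleton_iff] at hx
      subst hx
      exact ⟨huN, rfl⟩
    · rcases hN with hN | hN
      · refine hno ⟨N, ?_⟩
        have hNe : (IX ∩ X) ∪ (N ∩ Y) = N := by
          ext x
          have h1 := hall x
          have h2 := Set.ext_iff.mp heq x
          have h3 := hd x
          have h4 : x = u → x ∉ N ∧ x ∉ X := by
            rintro rfl
            exact ⟨huN, huX⟩
          simp only [Set.mem_inter_iff, Set.mem_union, Set.mem_compl_iff,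
            Set.mem_singleton_iff] at h2 ⊢
          tauto
        rw [hNe]
        exact hN
      · exact huN hN

end NestedCirc
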